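/- For s ≥ 1, let P(x,y) = Σ p_{n,k} y^k x^n where p_{n,k} is the number of s-ary paths of length n with pyramid weight k. Then P satisfies P = 1 + x·(P^s - (1-y)/(1-x·y))·P as formal power series. -/

import Mathlib

/-- An `s`-ary path of length `n`, encoded as a list of booleans where `true` is an up
step `(1,1)` and `false` is a (grand) down step `(1,-s)`; the path goes from `(0,0)` to
`((s+1)n, 0)` and never passes below the x-axis. -/
def IsSAryPath (s n : ℕ) (p : List Bool) : Prop :=
  p.length = (s + 1) * n ∧ p.count false = n ∧
  ∀ i, s * (p.take i).count false ≤ (p.take i).count true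

/-- The section of `p` from `a` to `b` (inclusive) is a pyramid `U^{sh} D^h` of height
`h`: `s·h` up steps followed immediately by `h` down steps. -/
def IsPyramidSecS (s : ℕ) (p : List Bool) (a b : ℕ) : Prop :=
  a ≤ b ∧ b < p.length ∧ b - a + 1 = (s + 1) * ((b - a + 1) / (s + 1)) ∧
  (p.drop a).take (b - a + 1) =
    List.replicate (s * ((b - a + 1) / (s + 1))) true ++
      List.replicate ((b - a + 1) / (s + 1)) false

/-- The pyramid section from `a` to `b` is maximal: not contained in a higher pyramid. -/
def MaximalPyramidSecS (s : ℕ) (p : List Bool) (a b : ℕ) : Prop :=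
  IsPyramidSecS s p a b ∧
    ¬ (s ≤ a ∧ b + 1 < p.length ∧ IsPyramidSecS s p (a - s) (b + 1))

open scoped Classical in
/-- The pyramid weight of an `s`-ary path `p`: the sum of the heights of its maximal
pyramids. -/
noncomputable def pyramidWeightS (s : ℕ) (p : List Bool) : ℕ :=
  ∑ q ∈ (Finset.range p.length ×ˢ Finset.range p.length).filter
      (fun q : ℕ × ℕ => MaximalPyramidSecS s p q.1 q.2),
    (q.2 - q.1 + 1) / (s + 1)

open scoped Classical in
/-- The number of exterior down steps of `p`: down steps belonging to no pyramid. -/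
noncomputable def exteriorDownSteps (s : ℕ) (p : List Bool) : ℕ :=
  ((Finset.range p.length).filter
    (fun j => p.getD j true = false ∧
      ¬ ∃ a ∈ Finset.range p.length, ∃ b ∈ Finset.range p.length,
        a ≤ j ∧ j ≤ b ∧ IsPyramidSecS s p a b)).card

open MvPowerSeries in
/-- `Ps s = Σ p_{n,k} y^k x^n` where `p_{n,k}` is the number of `s`-ary paths of
length `n` with pyramid weight `k`; `X 0` is `x` and `X 1` is `y`. -/
noncomputable def Ps (s : ℕ) : MvPowerSeries (Fin 2) ℚ :=
  fun d => (Nat.card {p : List Bool // IsSAryPath s (d 0) p ∧ pyramidWeightS s p = d 1} : ℚ)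

/-!
The height of a maximal pyramid is the number of pyramids with the same peak, so the pyramid weight
of a path is the number of all its pyramids, that is, the number of its prefixes that end with a
pyramid. A pyramid that starts before a path `t` and ends inside `t` makes `t` descend below its
starting height, so the pyramid weight is additive when a nonnegative path `t` is appended. Cutting
at the last passages from each height to the next one then shows that the nonnegative paths to
height `k` have generating function `P ^ (k + 1)`.

A nonempty path ends with a down step, and deleting it leaves a nonnegative path `q` to height `s`.
The pyramid weight drops by one if that step ended a pyramid and is unchanged otherwise. In the
first case `q` is a path to height `0` followed by `U^s U^{sh} D^h` for some `h`, so that these `q`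
have generating function `P / (1 - x y)`.
-/

section GeneratingFunction

open MvPowerSeries Finset.HasAntidiagonal

variable {σ α β : Type*} (R : Type*) [Semiring R]

/-- The generating function `∑ a ∈ A, X ^ w a` of a class `A` of objects `a` of weight `w a`. It
is only meaningful when there are finitely many objects of each weight: the objects of a weight
shared by infinitely many of them are not counted. -/
noncomputable def genFun (w : α → σ →₀ ℕ) (A : Set α) : MvPowerSeries σ R :=
  fun d => ({a ∈ A | w a = d}.ncard : R)

theorem coeff_genFun (w : α → σ →₀ ℕ) (A : Set α) (d : σ →₀ ℕ) :
    coeff d (genFun R w A) = ({a ∈ A | w a = d}.ncard : R) :=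
  rfl

theorem genFun_eq_of_bijOn {w : α → σ →₀ ℕ} {v : β → σ →₀ ℕ} {A : Set α} {B : Set β}
    {f : α → β} (hf : Set.BijOn f A B) (hw : ∀ a ∈ A, v (f a) = w a) :
    genFun R v B = genFun R w A := by
  ext d
  have hfd : Set.BijOn f {a ∈ A | w a = d} {b ∈ B | v b = d} :=
    ⟨fun a ha => ⟨hf.mapsTo ha.1, (hw a ha.1).trans ha.2⟩, hf.injOn.mono (Set.sep_subset _ _),
      fun b hb => by
        obtain ⟨a, ha, rfl⟩ := hf.surjOn hb.1
        exact ⟨a, ⟨ha, (hw a ha).symm.trans hb.2⟩, rfl⟩⟩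
  rw [coeff_genFun, coeff_genFun, hfd.ncard_eq]

theorem genFun_congr {w v : α → σ →₀ ℕ} {A : Set α} (h : ∀ a ∈ A, v a = w a) :
    genFun R v A = genFun R w A :=
  genFun_eq_of_bijOn R (Set.bijOn_id A) h

theorem genFun_singleton (w : α → σ →₀ ℕ) (a : α) :
    genFun R w {a} = monomial (w a) 1 := by
  classical
  ext d
  rw [coeff_genFun, coeff_monomial]
  split_ifs with h
  · rw [show {x ∈ ({a} : Set α) | w x = d} = {a} by ext; aesop, Set.ncard_singleton, Nat.cast_one]
  · rw [show {x ∈ ({a} : Set α) | w x = d} = ∅ by ext; aesop, Set.ncard_empty, Nat.cast_zero]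

theorem genFun_sep_add_genFun_sep_not {w : α → σ →₀ ℕ} {A : Set α}
    (hA : ∀ d, {a ∈ A | w a = d}.Finite) (P : α → Prop) :
    genFun R w {a ∈ A | P a} + genFun R w {a ∈ A | ¬ P a} = genFun R w A := by
  ext d
  have hunion : {a ∈ A | w a = d} =
      {a ∈ {a ∈ A | P a} | w a = d} ∪ {a ∈ {a ∈ A | ¬ P a} | w a = d} := by
    ext a
    by_cases ha : P a <;> simp [ha]
  have hdisj : Disjoint {a ∈ {a ∈ A | P a} | w a = d} {a ∈ {a ∈ A | ¬ P a} | w a = d} :=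
    Set.disjoint_left.2 fun a ha ha' => ha'.1.2 ha.1.2
  have hfin := hA d
  rw [hunion, Set.finite_union] at hfin
  rw [map_add, coeff_genFun, coeff_genFun, coeff_genFun, hunion,
    Set.ncard_union_eq hdisj hfin.1 hfin.2, Nat.cast_add]

theorem genFun_const_add (c : σ →₀ ℕ) (w : α → σ →₀ ℕ) (A : Set α) :
    genFun R (fun a => c + w a) A = monomial c 1 * genFun R w A := by
  classical
  ext d
  rw [coeff_genFun, coeff_monomial_mul, one_mul, coeff_genFun]
  split_ifs with hcd
  · simp only [← eq_tsub_iff_add_eq_of_le hcd, add_comm c]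
  · have hempty : {a ∈ A | c + w a = d} = ∅ :=
      Set.sep_eq_empty_iff_mem_false.2 fun a _ h => hcd (h ▸ le_self_add)
    rw [hempty, Set.ncard_empty, Nat.cast_zero]

theorem genFun_prod {w : α → σ →₀ ℕ} {v : β → σ →₀ ℕ} {A : Set α} {B : Set β}
    (hA : ∀ d, {a ∈ A | w a = d}.Finite) (hB : ∀ d, {b ∈ B | v b = d}.Finite) :
    genFun R (fun x : α × β => w x.1 + v x.2) (A ×ˢ B) = genFun R w A * genFun R v B := by
  classical
  ext d
  have hunion : {x ∈ A ×ˢ B | w x.1 + v x.2 = d} =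
      ⋃ e ∈ (antidiagonal d : Set ((σ →₀ ℕ) × (σ →₀ ℕ))),
        {a ∈ A | w a = e.1} ×ˢ {b ∈ B | v b = e.2} := by
    ext x
    simp only [Set.mem_sep_iff, Set.mem_prod, Set.mem_iUnion, Finset.mem_coe,
      mem_antidiagonal, exists_prop, Prod.exists]
    aesop
  have hdisj : (antidiagonal d : Set ((σ →₀ ℕ) × (σ →₀ ℕ))).PairwiseDisjoint
      fun e => {a ∈ A | w a = e.1} ×ˢ {b ∈ B | v b = e.2} :=
    fun e _ e' _ hne => Set.disjoint_left.2 fun x hx hx' =>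
      hne (Prod.ext (hx.1.2.symm.trans hx'.1.2) (hx.2.2.symm.trans hx'.2.2))
  rw [coeff_genFun, hunion, (Finset.finite_toSet _).ncard_biUnion
    (fun e _ => (hA e.1).prod (hB e.2)) hdisj, finsum_mem_coe_finset, coeff_mul, Nat.cast_sum]
  simp only [Set.ncard_prod, Nat.cast_mul, coeff_genFun]

theorem finite_nsmul_eq {d : σ →₀ ℕ} (hd : d ≠ 0) (e : σ →₀ ℕ) :
    {n ∈ (Set.univ : Set ℕ) | n • d = e}.Finite :=
  Set.Subsingleton.finite fun m hm n hn => by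
    obtain ⟨i, hi⟩ := DFunLike.ne_iff.1 hd
    exact Nat.eq_of_mul_eq_mul_right (Nat.pos_of_ne_zero hi)
      (DFunLike.congr_fun (hm.2.trans hn.2.symm) i)

theorem one_sub_monomial_mul_genFun_nsmul (R : Type*) [Ring R] {d : σ →₀ ℕ} (hd : d ≠ 0) :
    (1 - monomial d 1) * genFun R (fun n : ℕ => n • d) Set.univ = 1 := by
  have hzero : genFun R (fun n : ℕ => n • d) {n ∈ Set.univ | n = 0} = 1 := by
    have : {n ∈ (Set.univ : Set ℕ) | n = 0} = {0} := by ext; simp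
    rw [this, genFun_singleton, zero_nsmul, monomial_zero_one]
  have hpos : genFun R (fun n : ℕ => n • d) {n ∈ Set.univ | ¬ n = 0} =
      monomial d 1 * genFun R (fun n : ℕ => n • d) Set.univ := by
    rw [← genFun_const_add]
    refine genFun_eq_of_bijOn R (f := Nat.succ) ⟨fun n _ => ⟨trivial, n.succ_ne_zero⟩,
      Nat.succ_injective.injOn, fun n hn => ⟨n - 1, trivial, Nat.succ_pred_eq_of_ne_zero hn.2⟩⟩
      fun n _ => succ_nsmul' d n
  have hsplit := genFun_sep_add_genFun_sep_not R (finite_nsmul_eq hd) (· = 0)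
  rw [hzero, hpos] at hsplit
  rw [sub_mul, one_mul, sub_eq_iff_eq_add, hsplit]

end GeneratingFunction

section PyramidWeight

variable {s : ℕ}

/-- The pyramid `U^{sh} D^h` of height `h`, as a list of steps. -/
def pyramid (s h : ℕ) : List Bool :=
  List.replicate (s * h) true ++ List.replicate h false

@[simp]
theorem length_pyramid (s h : ℕ) : (pyramid s h).length = (s + 1) * h := by
  simp only [pyramid, List.length_append, List.length_replicate]
  ring

theorem pyramid_succ (s h : ℕ) :
    pyramid s (h + 1) = List.replicate s true ++ pyramid s h ++ [false] := by
  simp only [pyramid, mul_add_one, add_comm _ s, List.replicate_add, List.replicate_succ',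
    List.append_assoc]

/-- The path `p` contains a pyramid of height `h` whose peak is at position `c`, that is, whose
up steps end at position `c - 1` and whose down steps start at position `c`. -/
def HasPyramidAt (s : ℕ) (p : List Bool) (c h : ℕ) : Prop :=
  ∃ l r, p = l ++ pyramid s h ++ r ∧ c = l.length + s * h

theorem HasPyramidAt.of_succ {p : List Bool} {c h : ℕ} (H : HasPyramidAt s p c (h + 1)) :
    HasPyramidAt s p c h := by
  obtain ⟨l, r, rfl, rfl⟩ := H
  refine ⟨l ++ List.replicate s true, [false] ++ r, ?_, ?_⟩
  · simp only [pyramid_succ, List.append_assoc]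
  · rw [List.length_append, List.length_replicate]
    ring

theorem HasPyramidAt.mono {p : List Bool} {c h k : ℕ} (H : HasPyramidAt s p c h) (hk : k ≤ h) :
    HasPyramidAt s p c k :=
  Nat.decreasingInduction (fun _ _ => HasPyramidAt.of_succ) H hk

theorem HasPyramidAt.mul_le {p : List Bool} {c h : ℕ} (H : HasPyramidAt s p c h) : s * h ≤ c := by
  obtain ⟨l, r, -, rfl⟩ := H
  exact Nat.le_add_left _ _

theorem hasPyramidAt_iff_suffix_take {p : List Bool} {c h : ℕ} :
    HasPyramidAt s p c h ↔ c + h ≤ p.length ∧ pyramid s h <:+ p.take (c + h) := by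
  constructor
  · rintro ⟨l, r, rfl, rfl⟩
    have hlen : l.length + s * h + h = (l ++ pyramid s h).length := by
      rw [List.length_append, length_pyramid]
      ring
    rw [hlen, List.take_left]
    exact ⟨by simp, List.suffix_append _ _⟩
  · rintro ⟨hle, l, hl⟩
    refine ⟨l, p.drop (c + h), by rw [hl, List.take_append_drop], ?_⟩
    have hlen := congrArg List.length hl
    rw [List.length_append, length_pyramid, List.length_take_of_le hle] at hlen
    linarith

theorem HasPyramidAt.add_le_length {p : List Bool} {c h : ℕ} (H : HasPyramidAt s p c h) :
    c + h ≤ p.length :=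
  (hasPyramidAt_iff_suffix_take.1 H).1

theorem isPyramidSecS_iff {p : List Bool} {a b : ℕ} :
    IsPyramidSecS s p a b ↔
      ∃ h, 1 ≤ h ∧ b + 1 = a + (s + 1) * h ∧ HasPyramidAt s p (a + s * h) h := by
  constructor
  · rintro ⟨hab, hb, hlen, hp⟩
    generalize (b - a + 1) / (s + 1) = h at hlen hp
    refine ⟨h, Nat.pos_of_ne_zero ?_, by omega, p.take a, p.drop (b + 1), ?_, ?_⟩
    · rintro rfl
      omega
    · rw [pyramid, ← hp, ← List.take_add, ← add_assoc, Nat.add_sub_cancel' hab,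
        List.take_append_drop]
    · rw [List.length_take_of_le (by omega)]
  · rintro ⟨h, hh, hb, l, r, rfl, hc⟩
    obtain rfl : a = l.length := by omega
    have hpos : 0 < (s + 1) * h := Nat.mul_pos s.succ_pos hh
    have hlen : b - l.length + 1 = (s + 1) * h := by omega
    rw [IsPyramidSecS, hlen, Nat.mul_div_cancel_left h s.succ_pos]
    refine ⟨by omega, ?_, rfl, ?_⟩
    · simp only [List.length_append, length_pyramid]
      omega
    · rw [List.append_assoc, List.drop_left, ← length_pyramid, List.take_left, pyramid]

open scoped Classical in
/-- The height of the highest pyramid of `p` whose peak is at position `c`, and `0` if there is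
none. The search bound `p.length` is at least the height of every pyramid of `p`. -/
noncomputable def peakHeight (s : ℕ) (p : List Bool) (c : ℕ) : ℕ :=
  Nat.findGreatest (HasPyramidAt s p c) p.length

theorem lt_peakHeight_iff {p : List Bool} {c h : ℕ} :
    h < peakHeight s p c ↔ HasPyramidAt s p c (h + 1) := by
  classical
  refine ⟨fun h_lt => ?_, fun H => Nat.le_findGreatest ?_ H⟩
  · exact (Nat.findGreatest_of_ne_zero rfl (Nat.ne_zero_of_lt h_lt)).mono h_lt
  · exact le_of_add_le_right H.add_le_length

theorem peakHeight_eq_succ_iff {p : List Bool} {c h : ℕ} :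
    peakHeight s p c = h + 1 ↔ HasPyramidAt s p c (h + 1) ∧ ¬ HasPyramidAt s p c (h + 1 + 1) := by
  rw [← lt_peakHeight_iff, ← lt_peakHeight_iff]
  omega

theorem hasPyramidAt_succ_iff {p : List Bool} {a b h : ℕ} (hb : b + 1 = a + (s + 1) * h) :
    HasPyramidAt s p (a + s * h) (h + 1) ↔
      s ≤ a ∧ b + 1 < p.length ∧ IsPyramidSecS s p (a - s) (b + 1) := by
  constructor
  · intro H
    have hsa : s ≤ a := by linarith [H.mul_le]
    refine ⟨hsa, by linarith [H.add_le_length], isPyramidSecS_iff.2 ⟨h + 1, by omega, ?_, ?_⟩⟩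
    · zify [hsa] at hb ⊢
      linear_combination hb
    · convert H using 1
      zify [hsa]
      ring
  · rintro ⟨hsa, -, hsec⟩
    obtain ⟨k, -, hk, H⟩ := isPyramidSecS_iff.1 hsec
    obtain rfl : k = h + 1 := by
      refine Nat.eq_of_mul_eq_mul_left s.succ_pos ?_
      zify [hsa] at hb hk ⊢
      linear_combination hb - hk
    convert H using 1
    zify [hsa]
    ring

theorem hasPyramidAt_peakHeight {p : List Bool} {c : ℕ} (hc : 0 < peakHeight s p c) :
    HasPyramidAt s p c (peakHeight s p c) := by
  obtain ⟨h, hh⟩ := Nat.exists_eq_add_of_le' hc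
  rw [hh]
  exact (peakHeight_eq_succ_iff.1 hh).1

theorem maximalPyramidSecS_iff {p : List Bool} {a b : ℕ} :
    MaximalPyramidSecS s p a b ↔
      ∃ h, 0 < h ∧ peakHeight s p (a + s * h) = h ∧ b + 1 = a + s * h + h := by
  have hmul (h : ℕ) : a + s * h + h = a + (s + 1) * h := by ring
  rw [MaximalPyramidSecS, isPyramidSecS_iff]
  constructor
  · rintro ⟨⟨h, hh, hb, H⟩, hmax⟩
    obtain ⟨h, rfl⟩ := Nat.exists_eq_add_of_le' hh
    exact ⟨h + 1, hh, peakHeight_eq_succ_iff.2 ⟨H, mt (hasPyramidAt_succ_iff hb).1 hmax⟩,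
      hb.trans (hmul _).symm⟩
  · rintro ⟨h, hh, hpeak, hb⟩
    obtain ⟨h, rfl⟩ := Nat.exists_eq_add_of_le' hh
    obtain ⟨H, hmax⟩ := peakHeight_eq_succ_iff.1 hpeak
    rw [hmul] at hb
    exact ⟨⟨h + 1, hh, hb, H⟩, mt (hasPyramidAt_succ_iff hb).2 hmax⟩

theorem length_div_eq_height {a b h : ℕ} (hh : 0 < h) (hb : b + 1 = a + s * h + h) :
    (b - a + 1) / (s + 1) = h := by
  have hlen : b - a + 1 = (s + 1) * h := by
    rw [add_one_mul]
    omega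
  rw [hlen, Nat.mul_div_cancel_left _ s.succ_pos]

theorem pyramidWeightS_eq_sum_peakHeight (s : ℕ) (p : List Bool) :
    pyramidWeightS s p = ∑ c ∈ Finset.range p.length, peakHeight s p c := by
  classical
  rw [pyramidWeightS, ← Finset.sum_filter_ne_zero (Finset.range p.length)]
  refine Finset.sum_nbij (fun q => q.1 + s * ((q.2 - q.1 + 1) / (s + 1))) ?_ ?_ ?_ ?_
  · rintro ⟨a, b⟩ hab
    obtain ⟨hmem, hmax⟩ := Finset.mem_filter.1 hab
    obtain ⟨h, hh, hpeak, hb⟩ := maximalPyramidSecS_iff.1 hmax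
    have hb_lt : b < p.length := Finset.mem_range.1 (Finset.mem_product.1 hmem).2
    simp only [length_div_eq_height hh hb]
    exact Finset.mem_filter.2 ⟨Finset.mem_range.2 (by omega), hpeak.trans_ne hh.ne'⟩
  · rintro ⟨a, b⟩ hab ⟨a', b'⟩ hab' heq
    obtain ⟨h, hh, hpeak, hb⟩ := maximalPyramidSecS_iff.1 (Finset.mem_filter.1 hab).2
    obtain ⟨h', hh', hpeak', hb'⟩ := maximalPyramidSecS_iff.1 (Finset.mem_filter.1 hab').2
    simp only [length_div_eq_height hh hb, length_div_eq_height hh' hb'] at heq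
    obtain rfl : h = h' := by rw [← hpeak, heq, hpeak']
    exact Prod.ext (by simp only; omega) (by simp only; omega)
  · intro c hc
    have hpos := Nat.pos_of_ne_zero (Finset.mem_filter.1 hc).2
    have hpyr := hasPyramidAt_peakHeight hpos
    have hlen := hpyr.add_le_length
    obtain ⟨a, ha⟩ := Nat.exists_eq_add_of_le' hpyr.mul_le
    generalize hpeak : peakHeight s p c = h at hpos hlen ha
    subst ha
    obtain ⟨b, hb⟩ := Nat.exists_eq_add_of_le' (le_add_of_le_right hpos : 1 ≤ a + s * h + h)
    refine ⟨(a, b), Finset.mem_filter.2 ⟨Finset.mem_product.2 ⟨?_, ?_⟩,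
      maximalPyramidSecS_iff.2 ⟨h, hpos, hpeak, hb.symm⟩⟩, ?_⟩
    · exact Finset.mem_range.2 (by simp only; omega)
    · exact Finset.mem_range.2 (by simp only; omega)
    · simp only [length_div_eq_height hpos hb.symm]
  · rintro ⟨a, b⟩ hab
    obtain ⟨h, hh, hpeak, hb⟩ := maximalPyramidSecS_iff.1 (Finset.mem_filter.1 hab).2
    simp only [length_div_eq_height hh hb, hpeak]

/-- The path `p` ends with the down steps of a pyramid. -/
def EndsWithPyramid (s : ℕ) (p : List Bool) : Prop :=
  ∃ h, pyramid s (h + 1) <:+ p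

theorem EndsWithPyramid.append_left {p : List Bool} (H : EndsWithPyramid s p) (q : List Bool) :
    EndsWithPyramid s (q ++ p) := by
  obtain ⟨h, hh⟩ := H
  exact ⟨h, hh.trans (List.suffix_append q p)⟩

theorem eq_of_pyramid_succ_suffix (hs : 1 ≤ s) {p : List Bool} {h k : ℕ}
    (hh : pyramid s (h + 1) <:+ p) (hk : pyramid s (k + 1) <:+ p) : h = k := by
  have not_lt : ∀ {h k}, pyramid s (h + 1) <:+ p → pyramid s (k + 1) <:+ p → ¬ h < k := by
    intro h k hh hk hlt
    have htop : true :: List.replicate (h + 1) false <:+ p := by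
      obtain ⟨n, hn⟩ := Nat.exists_eq_add_of_le' (Nat.mul_pos hs h.succ_pos)
      refine List.IsSuffix.trans ⟨List.replicate n true, ?_⟩ hh
      simp only [pyramid, hn, Nat.succ_eq_add_one, List.replicate_add n, List.append_assoc]
      rfl
    have hrun : List.replicate (h + 1 + 1) false <:+ p :=
      (List.suffix_replicate_iff.2 (by simpa using hlt)).trans
        ((List.suffix_append (List.replicate (s * (k + 1)) true) _).trans hk)
    have heq := (List.suffix_of_suffix_length_le htop hrun (by simp)).eq_of_length (by simp)
    simp [List.replicate_succ] at heq
  exact le_antisymm (le_of_not_gt (not_lt hk hh)) (le_of_not_gt (not_lt hh hk))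

open scoped Classical in
/-- The number of pyramids of `p`, counted by the positions of their last steps: a pyramid is
determined by its last step, provided that `1 ≤ s`. -/
noncomputable def pyramidEndCount (s : ℕ) (p : List Bool) : ℕ :=
  {i ∈ Finset.range p.length | EndsWithPyramid s (p.take (i + 1))}.card

theorem pyramidWeightS_eq_pyramidEndCount (hs : 1 ≤ s) (p : List Bool) :
    pyramidWeightS s p = pyramidEndCount s p := by
  classical
  have pyramid_suffix {c j : ℕ} (hj : j < peakHeight s p c) :
      c + j < p.length ∧ pyramid s (j + 1) <:+ p.take (c + j + 1) :=
    hasPyramidAt_iff_suffix_take.1 (lt_peakHeight_iff.1 hj)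
  have hsigma : ∑ c ∈ Finset.range p.length, peakHeight s p c =
      ((Finset.range p.length).sigma fun c => Finset.range (peakHeight s p c)).card := by
    simp only [Finset.card_sigma, Finset.card_range]
  rw [pyramidWeightS_eq_sum_peakHeight, hsigma, pyramidEndCount]
  refine Finset.card_nbij (fun x => x.1 + x.2) ?_ ?_ ?_
  · rintro ⟨c, j⟩ hx
    have hj := pyramid_suffix (Finset.mem_range.1 (Finset.mem_sigma.1 hx).2)
    exact Finset.mem_filter.2 ⟨Finset.mem_range.2 hj.1, j, hj.2⟩
  · rintro ⟨c, j⟩ hx ⟨c', j'⟩ hx' (heq : c + j = c' + j')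
    have hj := (pyramid_suffix (Finset.mem_range.1 (Finset.mem_sigma.1 hx).2)).2
    have hj' := (pyramid_suffix (Finset.mem_range.1 (Finset.mem_sigma.1 hx').2)).2
    obtain rfl := eq_of_pyramid_succ_suffix hs hj (heq ▸ hj')
    rw [Nat.add_right_cancel heq]
  · intro i hi
    obtain ⟨hi, h, hh⟩ := Finset.mem_filter.1 hi
    have hlt := Finset.mem_range.1 hi
    obtain ⟨c, rfl⟩ : ∃ c, i = c + h := Nat.exists_eq_add_of_le' (by
      have := hh.length_le
      rw [length_pyramid, List.length_take_of_le hlt, add_one_mul] at this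
      omega)
    refine ⟨⟨c, h⟩, Finset.mem_sigma.2 ⟨Finset.mem_range.2 (by simp only; omega), ?_⟩, rfl⟩
    exact Finset.mem_range.2 (lt_peakHeight_iff.2 (hasPyramidAt_iff_suffix_take.2 ⟨hlt, hh⟩))

open scoped Classical in
theorem pyramidEndCount_concat (s : ℕ) (p : List Bool) (x : Bool) :
    pyramidEndCount s (p ++ [x]) =
      pyramidEndCount s p + if EndsWithPyramid s (p ++ [x]) then 1 else 0 := by
  rw [pyramidEndCount, pyramidEndCount, Finset.card_filter, Finset.card_filter,
    List.length_append, List.length_singleton, Finset.sum_range_succ]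
  congr 1
  · refine Finset.sum_congr rfl fun i hi => ?_
    rw [List.take_append_of_le_length (Finset.mem_range.1 hi)]
  · rw [List.take_of_length_le (by simp)]

end PyramidWeight

section PathsTo

variable {s : ℕ}

/-- The height at which the path `p`, started at height `0`, ends. -/
def pathHeight (s : ℕ) (p : List Bool) : ℤ :=
  p.count true - s * p.count false

@[simp]
theorem pathHeight_nil (s : ℕ) : pathHeight s [] = 0 := by
  simp [pathHeight]

@[simp]
theorem pathHeight_append (s : ℕ) (p q : List Bool) :
    pathHeight s (p ++ q) = pathHeight s p + pathHeight s q := by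
  simp only [pathHeight, List.count_append, Nat.cast_add]
  ring

@[simp]
theorem pathHeight_cons_true (s : ℕ) (p : List Bool) :
    pathHeight s (true :: p) = 1 + pathHeight s p := by
  rw [← List.singleton_append, pathHeight_append]
  simp [pathHeight]

@[simp]
theorem pathHeight_replicate_true (s n : ℕ) : pathHeight s (List.replicate n true) = n := by
  simp [pathHeight, List.count_replicate]

@[simp]
theorem pathHeight_replicate_false (s n : ℕ) :
    pathHeight s (List.replicate n false) = -(s * n) := by
  simp [pathHeight, List.count_replicate]

@[simp]
theorem pathHeight_singleton_false (s : ℕ) : pathHeight s [false] = -s := by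
  simp [pathHeight]

@[simp]
theorem pathHeight_pyramid (s h : ℕ) : pathHeight s (pyramid s h) = 0 := by
  simp [pyramid]

/-- The path `p`, started at height `0`, never passes below the x-axis. -/
def StaysNonneg (s : ℕ) (p : List Bool) : Prop :=
  ∀ l, l <+: p → 0 ≤ pathHeight s l

theorem staysNonneg_nil (s : ℕ) : StaysNonneg s [] := by
  rintro l hl
  rw [List.prefix_nil.1 hl, pathHeight_nil]

theorem StaysNonneg.pathHeight_nonneg {p : List Bool} (hp : StaysNonneg s p) :
    0 ≤ pathHeight s p :=
  hp p List.prefix_rfl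

theorem StaysNonneg.of_append {p q : List Bool} (hpq : StaysNonneg s (p ++ q)) :
    StaysNonneg s p :=
  fun l hl => hpq l (hl.trans (List.prefix_append p q))

theorem staysNonneg_concat_iff {p : List Bool} {x : Bool} :
    StaysNonneg s (p ++ [x]) ↔ StaysNonneg s p ∧ 0 ≤ pathHeight s (p ++ [x]) := by
  refine ⟨fun hp => ⟨hp.of_append, hp.pathHeight_nonneg⟩, fun hp l hl => ?_⟩
  rcases List.prefix_concat_iff.1 hl with rfl | hl
  · exact hp.2
  · exact hp.1 l hl

theorem StaysNonneg.append {p q : List Bool} (hp : StaysNonneg s p) (hq : StaysNonneg s q) :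
    StaysNonneg s (p ++ q) := by
  induction q using List.reverseRecOn with
  | nil => rwa [List.append_nil]
  | append_singleton q x ih =>
    rw [← List.append_assoc]
    refine staysNonneg_concat_iff.2 ⟨ih hq.of_append, ?_⟩
    rw [List.append_assoc, pathHeight_append]
    exact add_nonneg hp.pathHeight_nonneg hq.pathHeight_nonneg

theorem staysNonneg_replicate_true (s n : ℕ) : StaysNonneg s (List.replicate n true) := by
  intro l hl
  rw [(List.prefix_replicate_iff.1 hl).2, pathHeight_replicate_true]
  exact Nat.cast_nonneg _

theorem staysNonneg_pyramid (s h : ℕ) : StaysNonneg s (pyramid s h) := by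
  induction h with
  | zero => exact staysNonneg_nil s
  | succ h ih =>
    have hheight := pathHeight_pyramid s (h + 1)
    rw [pyramid_succ] at hheight ⊢
    exact staysNonneg_concat_iff.2 ⟨(staysNonneg_replicate_true s s).append ih, hheight.ge⟩

theorem eq_nil_or_eq_nil_of_pyramid_eq_append (hs : 1 ≤ s) {h : ℕ} {l t : List Bool}
    (hlt : pyramid s h = l ++ t) (ht : 0 ≤ pathHeight s t) : l = [] ∨ t = [] := by
  have hheight := pathHeight_pyramid s h
  rw [hlt, pathHeight_append] at hheight
  rcases List.append_eq_append_iff.1 hlt with ⟨m, -, hm⟩ | ⟨m, hm, -⟩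
  · right
    obtain ⟨-, ht'⟩ := List.suffix_replicate_iff.1 ⟨m, hm.symm⟩
    rw [ht', pathHeight_replicate_false] at ht
    have : (s : ℤ) * t.length = 0 := le_antisymm (by linarith) (by positivity)
    simpa [(Nat.zero_lt_of_lt hs).ne'] using this
  · left
    obtain ⟨-, hl⟩ := List.prefix_replicate_iff.1 ⟨m, hm.symm⟩
    rw [hl, pathHeight_replicate_true] at hheight
    exact List.length_eq_zero_iff.1 (by omega)

theorem endsWithPyramid_append_iff (hs : 1 ≤ s) {q t : List Bool} (ht : 0 ≤ pathHeight s t)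
    (hne : t ≠ []) : EndsWithPyramid s (q ++ t) ↔ EndsWithPyramid s t := by
  refine ⟨fun ⟨h, hh⟩ => ⟨h, ?_⟩, fun H => H.append_left q⟩
  rcases List.suffix_or_suffix_of_suffix hh (List.suffix_append q t) with hsuff | ⟨l, hl⟩
  · exact hsuff
  · have hnil := (eq_nil_or_eq_nil_of_pyramid_eq_append hs hl.symm ht).resolve_right hne
    rw [← hl, hnil, List.nil_append]

theorem EndsWithPyramid.false_mem {p : List Bool} (H : EndsWithPyramid s p) : false ∈ p := by
  obtain ⟨h, hh⟩ := H
  exact hh.subset (by simp [pyramid])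

theorem pyramidEndCount_eq_zero {p : List Bool} (hp : false ∉ p) : pyramidEndCount s p = 0 := by
  classical
  exact Finset.card_eq_zero.2 (Finset.filter_eq_empty_iff.2 fun _ _ H =>
    hp (List.mem_of_mem_take H.false_mem))

theorem pyramidEndCount_append (hs : 1 ≤ s) (q : List Bool) {t : List Bool}
    (ht : StaysNonneg s t) :
    pyramidEndCount s (q ++ t) = pyramidEndCount s q + pyramidEndCount s t := by
  induction t using List.reverseRecOn with
  | nil => rw [List.append_nil, pyramidEndCount_eq_zero List.not_mem_nil, add_zero]
  | append_singleton t x ih =>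
    rw [← List.append_assoc, pyramidEndCount_concat, pyramidEndCount_concat, ih ht.of_append,
      List.append_assoc, endsWithPyramid_append_iff hs ht.pathHeight_nonneg (by simp), add_assoc]

theorem pyramidEndCount_pyramid (hs : 1 ≤ s) (h : ℕ) : pyramidEndCount s (pyramid s h) = h := by
  induction h with
  | zero => exact pyramidEndCount_eq_zero List.not_mem_nil
  | succ h ih =>
    have hends : EndsWithPyramid s (pyramid s (h + 1)) := ⟨h, List.suffix_rfl⟩
    rw [pyramid_succ] at hends ⊢
    rw [pyramidEndCount_concat, if_pos hends, pyramidEndCount_append hs _ (staysNonneg_pyramid s h),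
      pyramidEndCount_eq_zero (by simp [List.mem_replicate]), ih, zero_add]

/-- The paths from height `0` to height `k` that never pass below the x-axis, of any length. -/
def pathsTo (s k : ℕ) : Set (List Bool) :=
  {p | StaysNonneg s p ∧ pathHeight s p = k}

/-- The exponent of the monomial `x ^ n * y ^ w` recording the number `n` of down steps and the
pyramid weight `w` of a path, where `x` and `y` are the variables of index `0` and `1`. -/
noncomputable def pathDegree (s : ℕ) (p : List Bool) : Fin 2 →₀ ℕ :=
  Finsupp.single 0 (p.count false) + Finsupp.single 1 (pyramidEndCount s p)

theorem pathDegree_eq_iff {p : List Bool} {d : Fin 2 →₀ ℕ} :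
    pathDegree s p = d ↔ p.count false = d 0 ∧ pyramidEndCount s p = d 1 := by
  simp [DFunLike.ext_iff, Fin.forall_fin_two, pathDegree]

theorem pathDegree_append (hs : 1 ≤ s) (q : List Bool) {t : List Bool} (ht : StaysNonneg s t) :
    pathDegree s (q ++ t) = pathDegree s q + pathDegree s t := by
  simp only [pathDegree, List.count_append, pyramidEndCount_append hs q ht, Finsupp.single_add]
  abel

theorem pathDegree_replicate_true (s n : ℕ) : pathDegree s (List.replicate n true) = 0 := by
  rw [pathDegree, pyramidEndCount_eq_zero (by simp [List.mem_replicate])]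
  simp [List.count_replicate]

theorem pathDegree_pyramid (hs : 1 ≤ s) (h : ℕ) :
    pathDegree s (pyramid s h) = h • (Finsupp.single 0 1 + Finsupp.single 1 1) := by
  rw [pathDegree, pyramidEndCount_pyramid hs]
  simp [pyramid, List.count_replicate]

open scoped Classical in
theorem pathDegree_concat_false (s : ℕ) (p : List Bool) :
    pathDegree s (p ++ [false]) = Finsupp.single 0 1 +
      Finsupp.single 1 (if EndsWithPyramid s (p ++ [false]) then 1 else 0) + pathDegree s p := by
  simp only [pathDegree, pyramidEndCount_concat, List.count_append, List.count_singleton_self,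
    Finsupp.single_add]
  abel

theorem finite_pathsTo_sep (s k : ℕ) (d : Fin 2 →₀ ℕ) :
    {p ∈ pathsTo s k | pathDegree s p = d}.Finite := by
  refine (List.finite_length_eq Bool (k + s * d 0 + d 0)).subset ?_
  rintro p ⟨⟨-, hk⟩, hd⟩
  have hfalse := (pathDegree_eq_iff.1 hd).1
  have hlen := List.count_true_add_count_false p
  rw [pathHeight, hfalse] at hk
  rw [hfalse] at hlen
  rw [Set.mem_ofPred_eq, ← hlen]
  zify
  linear_combination hk

theorem isSAryPath_iff {n : ℕ} {p : List Bool} :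
    IsSAryPath s n p ↔ p ∈ pathsTo s 0 ∧ p.count false = n := by
  have hnonneg : (∀ i, s * (p.take i).count false ≤ (p.take i).count true) ↔ StaysNonneg s p := by
    simp only [StaysNonneg, pathHeight, sub_nonneg, ← Nat.cast_mul, Nat.cast_le]
    refine ⟨fun h l hl => ?_, fun h i => h _ (List.take_prefix i p)⟩
    rw [List.prefix_iff_eq_take.1 hl]
    exact h _
  have hlength : p.count false = n → (p.length = (s + 1) * n ↔ pathHeight s p = (0 : ℕ)) := by
    rintro rfl
    rw [← List.count_true_add_count_false p, pathHeight, add_one_mul, add_left_inj, Nat.cast_zero,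
      sub_eq_zero, ← Nat.cast_mul, Nat.cast_inj]
  rw [IsSAryPath, hnonneg, pathsTo, Set.mem_ofPred_eq]
  tauto

theorem Ps_eq_genFun (hs : 1 ≤ s) : Ps s = genFun ℚ (pathDegree s) (pathsTo s 0) := by
  ext d
  rw [coeff_genFun, ← Nat.card_coe_set_eq]
  refine congrArg Nat.cast (Nat.card_congr (Equiv.subtypeEquivRight fun p => ?_))
  rw [isSAryPath_iff, pyramidWeightS_eq_pyramidEndCount hs, and_assoc, ← pathDegree_eq_iff]
  rfl

theorem exists_eq_append_cons_true {k : ℕ} {p : List Bool} (hp : StaysNonneg s p)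
    (hk : k < pathHeight s p) : ∃ q ∈ pathsTo s k, ∃ t, StaysNonneg s t ∧ q ++ true :: t = p := by
  induction p using List.reverseRecOn with
  | nil => exact absurd hk (by simp)
  | append_singleton p x ih =>
    rw [pathHeight_append] at hk
    obtain hlt | hle := lt_or_ge (k : ℤ) (pathHeight s p)
    · obtain ⟨q, hq, t, ht, rfl⟩ := ih hp.of_append hlt
      refine ⟨q, hq, t ++ [x], staysNonneg_concat_iff.2 ⟨ht, ?_⟩, by simp⟩
      rw [pathHeight_append, pathHeight_cons_true, hq.2] at hk
      rw [pathHeight_append]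
      omega
    · cases x with
      | false =>
        rw [pathHeight_singleton_false] at hk
        omega
      | true =>
        rw [pathHeight_cons_true, pathHeight_nil] at hk
        exact ⟨p, ⟨hp.of_append, by omega⟩, [], staysNonneg_nil s, rfl⟩

theorem length_le_of_append_cons_true_eq {q q' t t' : List Bool}
    (hq : pathHeight s q = pathHeight s q') (ht : StaysNonneg s t)
    (heq : q ++ true :: t = q' ++ true :: t') : q'.length ≤ q.length := by
  rcases List.append_eq_append_iff.1 heq with ⟨m, rfl, hm⟩ | ⟨m, rfl, -⟩
  · cases m with
    | nil => rw [List.append_nil]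
    | cons x m =>
      obtain ⟨rfl, rfl⟩ := List.cons_eq_cons.1 hm
      have hm_nonneg := ht.of_append.pathHeight_nonneg
      rw [pathHeight_append, pathHeight_cons_true] at hq
      omega
  · rw [List.length_append]
    exact Nat.le_add_right _ _

theorem bijOn_append_cons_true (s k : ℕ) :
    Set.BijOn (fun x : List Bool × List Bool => x.1 ++ true :: x.2)
      (pathsTo s k ×ˢ pathsTo s 0) (pathsTo s (k + 1)) := by
  refine ⟨?_, ?_, ?_⟩
  · rintro ⟨q, t⟩ ⟨⟨hq, hqk⟩, ht, ht0⟩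
    refine ⟨hq.append ((staysNonneg_replicate_true s 1).append ht), ?_⟩
    simp only [pathHeight_append, pathHeight_cons_true, hqk, ht0]
    push_cast
    ring
  · rintro ⟨q, t⟩ ⟨hq, ht⟩ ⟨q', t'⟩ ⟨hq', ht'⟩ heq
    have hheight : pathHeight s q = pathHeight s q' := hq.2.trans hq'.2.symm
    obtain ⟨rfl, hcons⟩ := List.append_inj heq <| le_antisymm
      (length_le_of_append_cons_true_eq hheight.symm ht'.1 heq.symm)
      (length_le_of_append_cons_true_eq hheight ht.1 heq)
    exact Prod.ext rfl (List.cons_injective hcons)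
  · rintro p ⟨hp, hk⟩
    obtain ⟨q, hq, t, ht, rfl⟩ := exists_eq_append_cons_true (k := k) hp (by omega)
    refine ⟨(q, t), ⟨hq, ht, ?_⟩, rfl⟩
    rw [pathHeight_append, pathHeight_cons_true, hq.2] at hk
    push_cast at hk ⊢
    linarith

theorem genFun_pathsTo (hs : 1 ≤ s) (k : ℕ) :
    genFun ℚ (pathDegree s) (pathsTo s k) = Ps s ^ (k + 1) := by
  induction k with
  | zero => rw [zero_add, pow_one, Ps_eq_genFun hs]
  | succ k ih =>
    rw [pow_succ, ← ih, Ps_eq_genFun hs,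
      ← genFun_prod ℚ (finite_pathsTo_sep s k) (finite_pathsTo_sep s 0)]
    refine genFun_eq_of_bijOn ℚ (bijOn_append_cons_true s k) ?_
    rintro ⟨q, t⟩ ⟨-, ht, -⟩
    have hone := staysNonneg_replicate_true s 1
    change pathDegree s (q ++ (List.replicate 1 true ++ t)) = _
    rw [pathDegree_append hs q (hone.append ht), pathDegree_append hs _ ht,
      pathDegree_replicate_true, zero_add]

theorem bijOn_concat_false (s : ℕ) :
    Set.BijOn (fun q => q ++ [false]) (pathsTo s s) {p ∈ pathsTo s 0 | p ≠ []} := by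
  refine ⟨?_, (List.append_left_injective [false]).injOn, ?_⟩
  · rintro q ⟨hq, hqs⟩
    have hheight : pathHeight s (q ++ [false]) = 0 := by
      rw [pathHeight_append, hqs, pathHeight_singleton_false, add_neg_cancel]
    exact ⟨⟨staysNonneg_concat_iff.2 ⟨hq, hheight.ge⟩, hheight⟩, by simp⟩
  · rintro p ⟨⟨hp, hp0⟩, hne⟩
    obtain ⟨q, x, rfl⟩ := (List.eq_nil_or_concat' p).resolve_left hne
    have hq_nonneg := hp.of_append.pathHeight_nonneg
    rw [pathHeight_append] at hp0
    cases x with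
    | false =>
      rw [pathHeight_singleton_false] at hp0
      exact ⟨q, ⟨hp.of_append, by push_cast at hp0; linarith⟩, rfl⟩
    | true =>
      rw [pathHeight_cons_true, pathHeight_nil] at hp0
      omega

theorem concat_false_eq_append_pyramid_iff {q r : List Bool} {h : ℕ} :
    q ++ [false] = r ++ pyramid s (h + 1) ↔
      q = r ++ (List.replicate s true ++ pyramid s h) := by
  rw [pyramid_succ, ← List.append_assoc, List.append_left_inj]

theorem bijOn_append_pyramid (hs : 1 ≤ s) :
    Set.BijOn (fun x : List Bool × ℕ => x.1 ++ (List.replicate s true ++ pyramid s x.2))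
      (pathsTo s 0 ×ˢ Set.univ) {q ∈ pathsTo s s | EndsWithPyramid s (q ++ [false])} := by
  refine ⟨?_, ?_, ?_⟩
  · rintro ⟨r, h⟩ ⟨⟨hr, hr0⟩, -⟩
    refine ⟨⟨hr.append ((staysNonneg_replicate_true s s).append (staysNonneg_pyramid s h)), ?_⟩,
      h, r, (concat_false_eq_append_pyramid_iff.2 rfl).symm⟩
    simp [hr0]
  · rintro ⟨r, h⟩ - ⟨r', h'⟩ - heq
    obtain rfl := eq_of_pyramid_succ_suffix hs
      ⟨r, (concat_false_eq_append_pyramid_iff.2 rfl).symm⟩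
      ⟨r', (concat_false_eq_append_pyramid_iff.2 heq).symm⟩
    exact Prod.ext (List.append_left_injective _ heq) rfl
  · rintro q ⟨⟨hq, hqs⟩, h, r, hr⟩
    obtain rfl := concat_false_eq_append_pyramid_iff.1 hr.symm
    refine ⟨(r, h), ⟨⟨hq.of_append, ?_⟩, trivial⟩, rfl⟩
    simpa using hqs

end PathsTo

section Recurrence

open MvPowerSeries

variable {s : ℕ}

theorem genFun_pathsTo_endsWithPyramid (hs : 1 ≤ s) :
    genFun ℚ (pathDegree s) {q ∈ pathsTo s s | EndsWithPyramid s (q ++ [false])} =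
      Ps s * (1 - X 0 * X 1)⁻¹ := by
  set d : Fin 2 →₀ ℕ := Finsupp.single 0 1 + Finsupp.single 1 1
  have hd : d ≠ 0 := fun h => by simpa [d] using DFunLike.congr_fun h 0
  have hgeom : (1 - X 0 * X 1)⁻¹ = genFun ℚ (fun h : ℕ => h • d) Set.univ := by
    rw [eq_comm, MvPowerSeries.eq_inv_iff_mul_eq_one (by simp), mul_comm, X, X,
      monomial_mul_monomial, one_mul]
    exact one_sub_monomial_mul_genFun_nsmul ℚ hd
  rw [hgeom, Ps_eq_genFun hs,
    ← genFun_prod ℚ (finite_pathsTo_sep s 0) (finite_nsmul_eq hd)]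
  refine genFun_eq_of_bijOn ℚ (bijOn_append_pyramid hs) ?_
  rintro ⟨r, h⟩ -
  have htrue := staysNonneg_replicate_true s s
  have hpyr := staysNonneg_pyramid s h
  rw [pathDegree_append hs r (htrue.append hpyr), pathDegree_append hs _ hpyr,
    pathDegree_replicate_true, zero_add, pathDegree_pyramid hs]

theorem genFun_pathsTo_zero_ne_nil (s : ℕ) :
    genFun ℚ (pathDegree s) {p ∈ pathsTo s 0 | p ≠ []} =
      X 0 * X 1 * genFun ℚ (pathDegree s) {q ∈ pathsTo s s | EndsWithPyramid s (q ++ [false])} +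
      X 0 * genFun ℚ (pathDegree s) {q ∈ pathsTo s s | ¬ EndsWithPyramid s (q ++ [false])} := by
  have hbij := bijOn_concat_false s
  have hfin (d) : {q ∈ pathsTo s s | pathDegree s (q ++ [false]) = d}.Finite := by
    refine (finite_pathsTo_sep s 0 d).of_injOn ?_ (List.append_left_injective [false]).injOn
    exact fun q hq => ⟨(hbij.mapsTo hq.1).1, hq.2⟩
  rw [genFun_eq_of_bijOn ℚ hbij fun _ _ => rfl,
    ← genFun_sep_add_genFun_sep_not ℚ hfin fun q => EndsWithPyramid s (q ++ [false]),
    X, X, monomial_mul_monomial, one_mul, ← genFun_const_add, ← genFun_const_add]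
  congr 1
  · exact genFun_congr ℚ fun q hq => by rw [pathDegree_concat_false, if_pos hq.2]
  · exact genFun_congr ℚ fun q hq => by
      rw [pathDegree_concat_false, if_neg hq.2, Finsupp.single_zero, add_zero]

theorem Ps_eq_one_add_genFun_ne_nil (hs : 1 ≤ s) :
    Ps s = 1 + genFun ℚ (pathDegree s) {p ∈ pathsTo s 0 | p ≠ []} := by
  have hnil : {p ∈ pathsTo s 0 | p = []} = {[]} := by
    ext p
    refine ⟨And.right, ?_⟩
    rintro rfl
    exact ⟨⟨staysNonneg_nil s, pathHeight_nil s⟩, rfl⟩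
  have hdeg : pathDegree s [] = 0 := pathDegree_replicate_true s 0
  rw [Ps_eq_genFun hs, ← genFun_sep_add_genFun_sep_not ℚ (finite_pathsTo_sep s 0) (· = []), hnil,
    genFun_singleton, hdeg, monomial_zero_one]

end Recurrence

open MvPowerSeries in
/-- For `s ≥ 1`, `P` satisfies `P = 1 + x·(P^s - (1-y)/(1-xy))·P`. -/
theorem Ps_equation (s : ℕ) (hs : 1 ≤ s) :
    Ps s = 1 + (X 0 : MvPowerSeries (Fin 2) ℚ) *
      ((Ps s) ^ s - (1 - X 1) * (1 - X 0 * X 1)⁻¹) * Ps s := by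
  have hpyr := genFun_pathsTo_endsWithPyramid hs
  have hsplit := genFun_sep_add_genFun_sep_not ℚ (finite_pathsTo_sep s s)
    fun q => EndsWithPyramid s (q ++ [false])
  have hrec := Ps_eq_one_add_genFun_ne_nil hs
  rw [genFun_pathsTo hs] at hsplit
  rw [genFun_pathsTo_zero_ne_nil] at hrec
  linear_combination hrec + X 0 * hsplit + (X 0 * X 1 - X 0) * hpyr
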